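/- arXiv:0902.4424 — 4 statements merged into one kernel-verified Lean document; each statement's English description precedes it below -/
import Mathlib

section
/- Let K be a real n×p matrix, y ∈ ℝⁿ, and λ > 0. The zero vector is a minimizer of the functional F_λ(x) = ‖Kx − y‖² + 2λ‖x‖₁ over ℝᵖ if and only if λ ≥ λ_max := max_i |(Kᵀy)_i| (i.e., λ ≥ ‖Kᵀy‖_∞). -/
open Finset

theorem lasso_expand {n p : ℕ} (K : Matrix (Fin n) (Fin p) ℝ) (y : Fin n → ℝ) (x : Fin p → ℝ) :
    (∑ j, (K.mulVec x j - y j) ^ 2) =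
      (∑ j, (K.mulVec x j) ^ 2) - 2 * (∑ i, x i * K.transpose.mulVec y i) + ∑ j, (y j) ^ 2 := by
  have h : (∑ i, x i * K.transpose.mulVec y i) = ∑ j, K.mulVec x j * y j := by
    change x ⬝ᵥ K.transpose.mulVec y = K.mulVec x ⬝ᵥ y
    rw [Matrix.mulVec_transpose, dotProduct_comm, ← Matrix.dotProduct_mulVec, dotProduct_comm]
  rw [h, Finset.mul_sum, ← Finset.sum_sub_distrib, ← Finset.sum_add_distrib]
  exact Finset.sum_congr rfl fun j _ => by ring

theorem lasso_scalar (A c lam : ℝ) (hA : 0 ≤ A)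
    (h : ∀ t : ℝ, 0 ≤ A * t ^ 2 - 2 * (t * c) + 2 * lam * |t|) : c ≤ lam := by
  by_contra! hc
  have hd : 0 < c - lam := by linarith
  have hB : 0 < A + 1 := by linarith
  have ht : 0 < (c - lam) / (A + 1) := div_pos hd hB
  have h1 := h ((c - lam) / (A + 1))
  rw [abs_of_pos ht] at h1
  set t := (c - lam) / (A + 1) with htd
  have e : c - lam = t * (A + 1) := by rw [htd]; field_simp
  have h2 : 0 ≤ A * t ^ 2 - 2 * t * (t * (A + 1)) := by rw [← e]; linarith
  nlinarith [mul_nonneg hA (sq_nonneg t), pow_pos ht 2]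

/-- The zero vector minimizes the lasso functional
`F_λ(x) = ‖Kx − y‖² + 2λ‖x‖₁` over `ℝᵖ` iff `λ ≥ max_i |(Kᵀy)_i|`. -/
theorem zero_is_lasso_minimizer_iff (n p : ℕ) (K : Matrix (Fin n) (Fin p) ℝ)
    (y : Fin n → ℝ) (lam : ℝ) (hlam : 0 < lam) :
    (∀ x : Fin p → ℝ,
        (∑ j, (K.mulVec (0 : Fin p → ℝ) j - y j) ^ 2)
            + 2 * lam * ∑ i, |(0 : Fin p → ℝ) i|
          ≤ (∑ j, (K.mulVec x j - y j) ^ 2) + 2 * lam * ∑ i, |x i|)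
      ↔ (⨆ i : Fin p, |K.transpose.mulVec y i|) ≤ lam := by
  simp only [lasso_expand]
  simp only [Matrix.mulVec_zero, Pi.zero_apply, abs_zero, zero_mul, Finset.sum_const_zero, mul_zero,
    ne_eq, OfNat.ofNat_ne_zero, not_false_eq_true, zero_pow, sub_zero, zero_add, add_zero]
  constructor
  · intro h
    refine Real.iSup_le (fun i => ?_) hlam.le
    have key : ∀ t : ℝ, 0 ≤ (∑ j, (K j i) ^ 2) * t ^ 2 - 2 * (t * K.transpose.mulVec y i)
        + 2 * lam * |t| := by
      intro t
      have h1 := h (Pi.single i t)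
      have e1 : ∑ k, (Pi.single i t : Fin p → ℝ) k * K.transpose.mulVec y k
          = t * K.transpose.mulVec y i := by
        rw [Finset.sum_eq_single i]
        · simp
        · intro b _ hb; simp [hb]
        · simp
      have e2 : ∑ k, |(Pi.single i t : Fin p → ℝ) k| = |t| := by
        rw [Finset.sum_eq_single i]
        · simp
        · intro b _ hb; simp [hb]
        · simp
      have e3 : ∑ j, (K.mulVec (Pi.single i t) j) ^ 2 = (∑ j, (K j i) ^ 2) * t ^ 2 := by
        rw [Finset.sum_mul]
        refine Finset.sum_congr rfl fun j _ => ?_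
        simp [Matrix.mulVec_single, mul_pow]
      rw [e1, e2, e3] at h1
      linarith
    have hA : 0 ≤ ∑ j, (K j i) ^ 2 := Finset.sum_nonneg fun j _ => sq_nonneg _
    refine abs_le'.2 ⟨lasso_scalar _ _ _ hA key, lasso_scalar _ _ _ hA fun t => ?_⟩
    have := key (-t)
    rw [abs_neg] at this
    linarith
  · intro h x
    have hc : ∀ i, |K.transpose.mulVec y i| ≤ lam := fun i =>
      (le_ciSup (f := fun i => |K.transpose.mulVec y i|) (Set.finite_range _).bddAbove i).trans h
    have h1 : ∑ i, x i * K.transpose.mulVec y i ≤ lam * ∑ i, |x i| := by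
      rw [Finset.mul_sum]
      refine Finset.sum_le_sum fun i _ => ?_
      calc _ ≤ |x i * K.transpose.mulVec y i| := le_abs_self _
        _ = |K.transpose.mulVec y i| * |x i| := by rw [abs_mul, mul_comm]
        _ ≤ _ := mul_le_mul_of_nonneg_right (hc i) (abs_nonneg _)
    have h2 : 0 ≤ ∑ j, (K.mulVec x j) ^ 2 := Finset.sum_nonneg fun j _ => sq_nonneg _
    linarith
end

section
/- Let K be a real n×p matrix, y ∈ ℝⁿ, and λ > 0. A vector x̄ ∈ ℝᵖ is a minimizer of F_λ(x) = ‖Kx − y‖² + 2λ‖x‖₁ over ℝᵖ if and only if, for every index i: (Kᵀ(y − Kx̄))_i = λ·sgn(x̄_i) whenever x̄_i ≠ 0, and |(Kᵀ(y − Kx̄))_i| ≤ λ whenever x̄_i = 0. -/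
open Finset

theorem lasso_aux_scalar (a c d : ℝ) (hd : 0 < d) (hc : 0 ≤ c)
    (h : ∀ t, 0 < t → t ≤ d → a * t ≤ c * t ^ 2) : a ≤ 0 := by
  by_contra ha
  push Not at ha
  have hq : 0 < a / (2 * (c + 1)) := by positivity
  have ht : 0 < min d (a / (2 * (c + 1))) := lt_min hd hq
  have h1 := h _ ht (min_le_left _ _)
  have h2 : min d (a / (2 * (c + 1))) ≤ a / (2 * (c + 1)) := min_le_right _ _
  generalize min d (a / (2 * (c + 1))) = t at *
  rw [le_div_iff₀ (by positivity)] at h2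
  have h3 : a ≤ c * t := by
    by_contra h4
    push Not at h4
    nlinarith
  nlinarith

theorem lasso_aux_expand (n p : ℕ) (K : Matrix (Fin n) (Fin p) ℝ) (y : Fin n → ℝ)
    (x h : Fin p → ℝ) :
    (∑ j, (K.mulVec (x + h) j - y j) ^ 2) = (∑ j, (K.mulVec x j - y j) ^ 2)
      - 2 * (∑ i, K.transpose.mulVec (y - K.mulVec x) i * h i)
      + ∑ j, (K.mulVec h j) ^ 2 := by
  have e : (∑ i, K.transpose.mulVec (y - K.mulVec x) i * h i)
      = ∑ j, (y j - K.mulVec x j) * K.mulVec h j := by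
    have := Matrix.dotProduct_mulVec (y - K.mulVec x) K h
    rw [← Matrix.mulVec_transpose] at this
    simpa [dotProduct] using this.symm
  rw [e, Finset.mul_sum, ← Finset.sum_sub_distrib, ← Finset.sum_add_distrib]
  refine Finset.sum_congr rfl fun j _ => ?_
  rw [Matrix.mulVec_add, Pi.add_apply]
  ring

/-- `x̄` minimizes the lasso functional `F_λ(x) = ‖Kx − y‖² + 2λ‖x‖₁`
iff for every `i` : `(Kᵀ(y − Kx̄))_i = λ sgn(x̄_i)` when `x̄_i ≠ 0`, and
`|(Kᵀ(y − Kx̄))_i| ≤ λ` when `x̄_i = 0`. -/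
theorem lasso_minimizer_iff_optimality_conditions (n p : ℕ)
    (K : Matrix (Fin n) (Fin p) ℝ) (y : Fin n → ℝ) (lam : ℝ) (hlam : 0 < lam)
    (xbar : Fin p → ℝ) :
    (∀ x : Fin p → ℝ,
        (∑ j, (K.mulVec xbar j - y j) ^ 2) + 2 * lam * ∑ i, |xbar i|
          ≤ (∑ j, (K.mulVec x j - y j) ^ 2) + 2 * lam * ∑ i, |x i|)
      ↔ ∀ i : Fin p,
          (xbar i ≠ 0 →
            K.transpose.mulVec (y - K.mulVec xbar) i = lam * Real.sign (xbar i)) ∧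
          (xbar i = 0 →
            |K.transpose.mulVec (y - K.mulVec xbar) i| ≤ lam) := by
  constructor
  · intro H i
    set g := K.transpose.mulVec (y - K.mulVec xbar) i with hg
    obtain ⟨c, hc, key⟩ : ∃ c : ℝ, 0 ≤ c ∧ ∀ t : ℝ,
        2 * g * t ≤ c * t ^ 2 + 2 * lam * (|xbar i + t| - |xbar i|) := by
      refine ⟨∑ j, (K j i) ^ 2, Finset.sum_nonneg fun j _ => sq_nonneg _, fun t => ?_⟩
      have h1 := H (xbar + Pi.single i t)
      rw [lasso_aux_expand] at h1
      have e1 : (∑ k, K.transpose.mulVec (y - K.mulVec xbar) k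
          * (Pi.single i t : Fin p → ℝ) k) = g * t := by
        rw [Finset.sum_eq_single i]
        · simp [hg]
        · intro b _ hb
          simp [Pi.single_eq_of_ne hb]
        · simp
      have e2 : (∑ j, (K.mulVec (Pi.single i t) j) ^ 2) = (∑ j, (K j i) ^ 2) * t ^ 2 := by
        rw [Finset.sum_mul]
        refine Finset.sum_congr rfl fun j _ => ?_
        simp [mul_pow, mul_comm]
      have e3 : (∑ k, |(xbar + Pi.single i t : Fin p → ℝ) k|) - ∑ k, |xbar k|
          = |xbar i + t| - |xbar i| := by
        rw [← Finset.sum_sub_distrib, Finset.sum_eq_single i]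
        · simp
        · intro b _ hb
          simp [Pi.single_eq_of_ne hb]
        · simp
      rw [e1, e2] at h1
      rw [← e3]
      linarith
    constructor
    · intro hx
      rcases lt_or_gt_of_ne hx with hx | hx
      · rw [Real.sign_of_neg hx]
        have a1 := lasso_aux_scalar (2 * (g + lam)) c (-xbar i) (by linarith) hc (by
          intro t h0 h1
          have := key t
          rw [abs_of_nonpos (by linarith : xbar i + t ≤ 0), abs_of_neg hx] at this
          linarith)
        have a2 := lasso_aux_scalar (-(2 * (g + lam))) c (-xbar i) (by linarith) hc (by
          intro t h0 h1
          have := key (-t)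
          rw [abs_of_nonpos (by linarith : xbar i + -t ≤ 0), abs_of_neg hx] at this
          linarith [neg_sq t])
        linarith
      · rw [Real.sign_of_pos hx]
        have a1 := lasso_aux_scalar (2 * (g - lam)) c (xbar i) hx hc (by
          intro t h0 h1
          have := key t
          rw [abs_of_nonneg (by linarith : 0 ≤ xbar i + t), abs_of_pos hx] at this
          linarith)
        have a2 := lasso_aux_scalar (-(2 * (g - lam))) c (xbar i) hx hc (by
          intro t h0 h1
          have := key (-t)
          rw [abs_of_nonneg (by linarith : 0 ≤ xbar i + -t), abs_of_pos hx] at this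
          rw [neg_sq] at this
          linarith)
        linarith
    · intro hx
      rw [hx] at key
      have a1 := lasso_aux_scalar (2 * (g - lam)) c 1 one_pos hc (by
          intro t h0 h1
          have := key t
          rw [zero_add, abs_of_pos h0, abs_zero] at this
          linarith)
      have a2 := lasso_aux_scalar (2 * (-g - lam)) c 1 one_pos hc (by
          intro t h0 h1
          have := key (-t)
          rw [zero_add, abs_neg, abs_of_pos h0, abs_zero, neg_sq] at this
          linarith)
      rw [abs_le]
      constructor <;> linarith
  · intro H x
    have hx : x = xbar + (x - xbar) := by simp
    have h1 := lasso_aux_expand n p K y xbar (x - xbar)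
    rw [← hx] at h1
    have h2 : 0 ≤ ∑ j, (K.mulVec (x - xbar) j) ^ 2 :=
      Finset.sum_nonneg fun j _ => sq_nonneg _
    have h3 : (∑ i, K.transpose.mulVec (y - K.mulVec xbar) i * (x - xbar) i)
        ≤ ∑ i, lam * (|x i| - |xbar i|) := by
      refine Finset.sum_le_sum fun i _ => ?_
      obtain ⟨ha, hb⟩ := H i
      rw [Pi.sub_apply]
      by_cases h0 : xbar i = 0
      · have := hb h0
        rw [h0, abs_zero, sub_zero, sub_zero]
        calc _ ≤ |K.transpose.mulVec (y - K.mulVec xbar) i * x i| := le_abs_self _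
          _ ≤ _ := by
            rw [abs_mul]
            exact mul_le_mul_of_nonneg_right this (abs_nonneg _)
      · rw [ha h0, mul_assoc]
        refine mul_le_mul_of_nonneg_left ?_ hlam.le
        rcases lt_or_gt_of_ne h0 with hn | hn
        · rw [Real.sign_of_neg hn, abs_of_neg hn]
          linarith [neg_le_abs (x i)]
        · rw [Real.sign_of_pos hn, abs_of_pos hn]
          linarith [le_abs_self (x i)]
    rw [← Finset.mul_sum, Finset.sum_sub_distrib] at h3
    linarith
end

section
/- Let K be a real n×p matrix, y ∈ ℝⁿ, λ > 0, and define T(x) = S_λ[x + Kᵀ(y − Kx)]. Assume the operator norm ‖K‖ < √2. Then a vector x* ∈ ℝᵖ is a fixed point of T (i.e., T(x*) = x*) if and only if x* is a minimizer of F_λ(x) = ‖Kx − y‖² + 2λ‖x‖₁ over ℝᵖ. -/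
open Finset

/-- The soft-thresholding operator `S_λ`, acting componentwise:
`(S_λ[b])_i = b_i − λ·sgn(b_i)` if `|b_i| > λ`, and `0` otherwise. -/
noncomputable def softThreshold (p : ℕ) (lam : ℝ) (b : Fin p → ℝ) : Fin p → ℝ :=
  fun i => if lam < |b i| then b i - lam * Real.sign (b i) else 0

lemma soft_scalar (lam : ℝ) (hlam : 0 < lam) (x g : ℝ) :
    (if lam < |x + g| then (x + g) - lam * Real.sign (x + g) else 0) = x ↔
      ∀ t : ℝ, lam * |x| + g * (t - x) ≤ lam * |t| := by
  constructor
  · intro h t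
    have h1 := le_abs_self t
    have h2 := neg_abs_le t
    split_ifs at h with hc
    · rcases lt_trichotomy (x + g) 0 with hs | hs | hs
      · rw [Real.sign_of_neg hs] at h
        rw [abs_of_neg hs] at hc
        have hg : g = -lam := by linarith
        have hx : x < 0 := by linarith
        rw [abs_of_neg hx, hg]
        nlinarith
      · rw [hs] at hc; simp at hc; linarith
      · rw [Real.sign_of_pos hs] at h
        rw [abs_of_pos hs] at hc
        have hg : g = lam := by linarith
        have hx : 0 < x := by linarith
        rw [abs_of_pos hx, hg]
        nlinarith
    · subst h
      simp only [zero_add, not_lt] at hc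
      simp only [abs_zero, sub_zero, mul_zero, zero_add]
      calc g * t ≤ |g * t| := le_abs_self _
        _ = |g| * |t| := abs_mul _ _
        _ ≤ _ := by gcongr
  · intro h
    have h0 := h 0
    have h2 := h (2 * x)
    have h3 := h (x + 1)
    have h4 := h (x - 1)
    have a3 := abs_add_le x 1
    have a4 := abs_sub x 1
    rw [abs_mul] at h2
    norm_num at h0 h2 a3 a4
    have hg1 : g ≤ lam := by nlinarith
    have hg2 : -lam ≤ g := by nlinarith
    rcases lt_trichotomy x 0 with hs | hs | hs
    · rw [abs_of_neg hs] at h0 h2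
      have : g = -lam := by nlinarith
      subst this
      have hn : x + -lam < 0 := by linarith
      rw [abs_of_neg hn, Real.sign_of_neg hn, if_pos (by linarith)]
      ring
    · subst hs
      rw [if_neg]
      rw [zero_add, not_lt, abs_le]; exact ⟨hg2, hg1⟩
    · rw [abs_of_pos hs] at h0 h2
      have : g = lam := by nlinarith
      subst this
      have hn : 0 < x + g := by linarith
      rw [abs_of_pos hn, Real.sign_of_pos hn, if_pos (by linarith)]
      ring

lemma quad_expand (n p : ℕ) (K : Matrix (Fin n) (Fin p) ℝ) (y : Fin n → ℝ) (x d : Fin p → ℝ) :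
    ∑ j, (K.mulVec (x + d) j - y j) ^ 2 = ∑ j, (K.mulVec x j - y j) ^ 2
      - 2 * ∑ i, K.transpose.mulVec (y - K.mulVec x) i * d i + ∑ j, (K.mulVec d j) ^ 2 := by
  have h : ∑ i, K.transpose.mulVec (y - K.mulVec x) i * d i
      = ∑ j, (y - K.mulVec x) j * K.mulVec d j := by
    change (K.transpose.mulVec (y - K.mulVec x)) ⬝ᵥ d = (y - K.mulVec x) ⬝ᵥ (K.mulVec d)
    rw [Matrix.mulVec_transpose, Matrix.dotProduct_mulVec]
  rw [h, Finset.mul_sum, ← Finset.sum_sub_distrib, ← Finset.sum_add_distrib]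
  refine Finset.sum_congr rfl fun j _ => ?_
  rw [Matrix.mulVec_add]
  simp only [Pi.add_apply, Pi.sub_apply]
  ring

lemma small_s (A B : ℝ) (h : ∀ s : ℝ, 0 < s → s ≤ 1 → 0 ≤ s * A + B) : 0 ≤ B := by
  by_contra hB
  push Not at hB
  have hA : 0 < |A| + 1 - B := by have := abs_nonneg A; linarith
  have h1 := h (-B / (|A| + 1 - B)) (div_pos (by linarith) hA)
    (by rw [div_le_one hA]; have := abs_nonneg A; linarith)
  have h2 : 0 ≤ (-B / (|A| + 1 - B) * A + B) * (|A| + 1 - B) := mul_nonneg h1 hA.le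
  have h3 : (-B / (|A| + 1 - B) * A + B) * (|A| + 1 - B) = -B * A + B * (|A| + 1 - B) := by
    field_simp
  rw [h3] at h2
  nlinarith [le_abs_self A]

/-- with `T(x) = S_λ[x + Kᵀ(y − Kx)]` and `‖K‖ < √2` (operator norm),
`x*` is a fixed point of `T` iff `x*` minimizes `F_λ(x) = ‖Kx − y‖² + 2λ‖x‖₁`. -/
theorem fixedPoint_iff_lasso_minimizer (n p : ℕ) (K : Matrix (Fin n) (Fin p) ℝ)
    (y : Fin n → ℝ) (lam : ℝ) (hlam : 0 < lam)
    (hK : ‖LinearMap.toContinuousLinearMap (Matrix.toEuclideanLin K)‖ < Real.sqrt 2)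
    (xstar : Fin p → ℝ) :
    softThreshold p lam (xstar + K.transpose.mulVec (y - K.mulVec xstar)) = xstar
      ↔ ∀ x : Fin p → ℝ,
          (∑ j, (K.mulVec xstar j - y j) ^ 2) + 2 * lam * ∑ i, |xstar i|
            ≤ (∑ j, (K.mulVec x j - y j) ^ 2) + 2 * lam * ∑ i, |x i| := by
  have key : softThreshold p lam (xstar + K.transpose.mulVec (y - K.mulVec xstar)) = xstar ↔
      ∀ i, ∀ t : ℝ, lam * |xstar i| + K.transpose.mulVec (y - K.mulVec xstar) i * (t - xstar i)
        ≤ lam * |t| := by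
    rw [funext_iff]
    exact forall_congr' fun i => soft_scalar lam hlam _ _
  rw [key]
  constructor
  · intro h x
    have hq := quad_expand n p K y xstar (x - xstar)
    rw [add_sub_cancel] at hq
    rw [hq]
    have hs := Finset.sum_le_sum fun i (_ : i ∈ Finset.univ) => h i (x i)
    rw [Finset.sum_add_distrib, ← Finset.mul_sum, ← Finset.mul_sum] at hs
    have hp : 0 ≤ ∑ j, (K.mulVec (x - xstar) j) ^ 2 := Finset.sum_nonneg fun j _ => sq_nonneg _
    simp only [Pi.sub_apply] at *
    linarith
  · intro h i t
    set g := K.transpose.mulVec (y - K.mulVec xstar) with hg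
    set e : Fin p → ℝ := Pi.single i (t - xstar i) with he
    have hB := small_s (∑ j, (K.mulVec e j) ^ 2)
      (2 * (lam * (|t| - |xstar i|) - g i * (t - xstar i))) ?_
    · linarith
    intro s hs0 hs1
    have h1 := h (xstar + s • e)
    rw [quad_expand, ← hg] at h1
    have e1 : ∑ k, g k * (s • e) k = s * (g i * (t - xstar i)) := by
      rw [Finset.sum_eq_single i]
      · simp [he]; ring
      · intro b _ hb; simp [he, hb]
      · simp
    have e2 : ∑ j, (K.mulVec (s • e) j) ^ 2 = s ^ 2 * ∑ j, (K.mulVec e j) ^ 2 := by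
      rw [Matrix.mulVec_smul, Finset.mul_sum]
      simp [mul_pow]
    have e3 : ∑ k, |(xstar + s • e) k| ≤ ∑ k, |xstar k| + s * (|t| - |xstar i|) := by
      have : ∑ k, (|(xstar + s • e) k| - |xstar k|) = |(xstar + s • e) i| - |xstar i| := by
        rw [Finset.sum_eq_single i]
        · intro b _ hb; simp [he, hb]
        · simp
      rw [Finset.sum_sub_distrib] at this
      have h5 : |(xstar + s • e) i| ≤ (1 - s) * |xstar i| + s * |t| := by
        have : (xstar + s • e) i = (1 - s) * xstar i + s * t := by simp [he]; ring
        rw [this]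
        refine (abs_add_le _ _).trans ?_
        rw [abs_mul, abs_mul, abs_of_pos hs0, abs_of_nonneg (by linarith : 0 ≤ 1 - s)]
      linarith
    rw [e1, e2] at h1
    have h6 := mul_le_mul_of_nonneg_left e3 (by linarith : 0 ≤ 2 * lam)
    have h7 : 0 ≤ s * (s * ∑ j, (K.mulVec e j) ^ 2
        + 2 * (lam * (|t| - |xstar i|) - g i * (t - xstar i))) := by linarith
    exact nonneg_of_mul_nonneg_right h7 hs0
end

section
/- Let Ω ⊂ ℝᵖ be a nonempty closed convex set, f : ℝᵖ → ℝ continuously differentiable, β, θ ∈ (0,1), and 0 < α_min ≤ α_max. Let {x⁽ᵏ⁾} ⊂ Ω be generated by the monotone gradient projection method: α_k ∈ [α_min, α_max], h⁽ᵏ⁾ = P_Ω(x⁽ᵏ⁾ − α_k∇f(x⁽ᵏ⁾)), d⁽ᵏ⁾ = h⁽ᵏ⁾ − x⁽ᵏ⁾ ≠ 0, x⁽ᵏ⁺¹⁾ = x⁽ᵏ⁾ + λ_k d⁽ᵏ⁾, where λ_k = θ^{j_k} with j_k the smallest nonnegative integer j such that f(x⁽ᵏ⁾ + θʲ d⁽ᵏ⁾)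 ≤ f(x⁽ᵏ⁾) + βθʲ∇f(x⁽ᵏ⁾)ᵀd⁽ᵏ⁾. If the level set Ω₀ = {x ∈ Ω : f(x) ≤ f(x⁽⁰⁾)} is bounded, then every accumulation point of {x⁽ᵏ⁾} is a stationary point of f on Ω. -/
open RealInnerProductSpace Filter

/-- convergence of the monotone gradient projection method with
Armijo backtracking line search: if the level set `Ω₀ = {x ∈ Ω : f(x) ≤ f(x⁽⁰⁾)}`
is bounded, then every accumulation point of the sequence `{x⁽ᵏ⁾}` is a
stationary point of `f` on `Ω`. -/
theorem gradient_projection_accumulation_points_stationary (p : ℕ)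
    (Ω : Set (EuclideanSpace ℝ (Fin p))) (hcl : IsClosed Ω) (hconv : Convex ℝ Ω)
    (f : EuclideanSpace ℝ (Fin p) → ℝ) (hf : ContDiff ℝ 1 f)
    (β θ : ℝ) (hβ : β ∈ Set.Ioo (0 : ℝ) 1) (hθ : θ ∈ Set.Ioo (0 : ℝ) 1)
    (αmin αmax : ℝ) (hαmin : 0 < αmin) (hαminmax : αmin ≤ αmax)
    (x h : ℕ → EuclideanSpace ℝ (Fin p)) (αk : ℕ → ℝ) (j : ℕ → ℕ)
    (hxΩ : ∀ k, x k ∈ Ω)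
    (hαk : ∀ k, αk k ∈ Set.Icc αmin αmax)
    (hhΩ : ∀ k, h k ∈ Ω)
    (hproj : ∀ k, ∀ w ∈ Ω,
        ‖x k - αk k • gradient f (x k) - h k‖ ≤ ‖x k - αk k • gradient f (x k) - w‖)
    (hdne : ∀ k, h k - x k ≠ 0)
    (hupd : ∀ k, x (k + 1) = x k + θ ^ j k • (h k - x k))
    (harmijo : ∀ k,
        f (x k + θ ^ j k • (h k - x k))
          ≤ f (x k) + β * θ ^ j k * ⟪gradient f (x k), h k - x k⟫)
    (hjmin : ∀ k, ∀ j' < j k,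
        ¬ f (x k + θ ^ j' • (h k - x k))
            ≤ f (x k) + β * θ ^ j' * ⟪gradient f (x k), h k - x k⟫)
    (hbdd : Bornology.IsBounded {z ∈ Ω | f z ≤ f (x 0)}) :
    ∀ xstar : EuclideanSpace ℝ (Fin p), MapClusterPt xstar atTop x →
      xstar ∈ Ω ∧ ∀ z ∈ Ω, 0 ≤ ⟪gradient f xstar, z - xstar⟫ := by
  
  intro xs hxs
  obtain ⟨φ, hφ, hφx⟩ := MapClusterPt.tendsto_subseq hxs
  refine ⟨hcl.mem_of_tendsto hφx (Eventually.of_forall fun n => hxΩ _), ?_⟩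
  have hdiff : Differentiable ℝ f := hf.differentiable one_ne_zero
  have hgc : Continuous (gradient f) := by
    unfold gradient
    exact (InnerProductSpace.toDual ℝ _).symm.continuous.comp (hf.continuous_fderiv one_ne_zero)
  -- variational inequality
  have hVI : ∀ k, ∀ w ∈ Ω, ⟪-(h k - x k) - αk k • gradient f (x k), w - x k - (h k - x k)⟫ ≤ 0 := by
    intro k w hw
    have hne : Nonempty Ω := ⟨⟨w, hw⟩⟩
    have := (norm_eq_iInf_iff_real_inner_le_zero hconv (u := x k - αk k • gradient f (x k))
      (hhΩ k)).1 (le_antisymm (le_ciInf fun w => hproj k w w.2)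
        (ciInf_le (f := fun w : Ω => ‖x k - αk k • gradient f (x k) - w‖)
          ⟨0, by rintro _ ⟨w, rfl⟩; positivity⟩ ⟨h k, hhΩ k⟩)) w hw
    convert this using 2 <;> abel_nf
  have hαpos : ∀ k, 0 < αk k := fun k => hαmin.trans_le (hαk k).1
  have hm : ∀ k, ‖h k - x k‖ ^ 2 + αk k * ⟪gradient f (x k), h k - x k⟫ ≤ 0 := by
    intro k
    have := hVI k (x k) (hxΩ k)
    rw [sub_self, zero_sub, inner_neg_right, inner_sub_left, inner_neg_left, real_inner_smul_left,
      real_inner_self_eq_norm_sq] at this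
    linarith
  have hm0 : ∀ k, ⟪gradient f (x k), h k - x k⟫ ≤ 0 := by
    intro k
    have := hm k
    by_contra hc
    push Not at hc
    have := mul_pos (hαpos k) hc
    nlinarith [sq_nonneg ‖h k - x k‖]
  have hdb : ∀ k, ‖h k - x k‖ ≤ αmax * ‖gradient f (x k)‖ := by
    intro k
    have h1 := hm k
    have h2 := neg_le_of_abs_le (abs_real_inner_le_norm (gradient f (x k)) (h k - x k))
    have h3 := norm_pos_iff.2 (hdne k)
    have h4 : ‖h k - x k‖ ≤ αk k * ‖gradient f (x k)‖ := by
      have h5 := mul_le_mul_of_nonneg_left h2 (hαpos k).le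
      refine le_of_mul_le_mul_right ?_ h3
      nlinarith
    exact h4.trans (mul_le_mul_of_nonneg_right (hαk k).2 (norm_nonneg _))
  have hφg : Tendsto (fun n => gradient f (x (φ n))) atTop (nhds (gradient f xs)) :=
    (hgc.tendsto xs).comp hφx
  obtain ⟨C, hC⟩ := hφg.norm.bddAbove_range
  have hmem : ∀ n, (αk (φ n), h (φ n) - x (φ n)) ∈
      Set.Icc αmin αmax ×ˢ Metric.closedBall (0 : EuclideanSpace ℝ (Fin p)) (αmax * C) := by
    intro n
    refine ⟨hαk _, ?_⟩
    rw [mem_closedBall_zero_iff]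
    exact (hdb _).trans (mul_le_mul_of_nonneg_left (hC ⟨n, rfl⟩) (hαmin.le.trans hαminmax))
  obtain ⟨⟨a, d⟩, had, ψ, hψ, hψl⟩ :=
    (isCompact_Icc.prod (isCompact_closedBall _ _)).tendsto_subseq hmem
  have ha0 : 0 < a := hαmin.trans_le had.1.1
  rw [nhds_prod_eq, tendsto_prod_iff'] at hψl
  obtain ⟨ha, hd⟩ := hψl
  simp only [Function.comp_def] at ha hd hφx
  obtain ⟨σ, hσdef⟩ : ∃ σ : ℕ → ℕ, ∀ n, σ n = φ (ψ n) := ⟨_, fun _ => rfl⟩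
  have hσ : Tendsto σ atTop atTop := by
    rw [funext hσdef]; exact (hφ.comp hψ).tendsto_atTop
  have hx := hφx.comp hψ.tendsto_atTop
  have hg := hφg.comp hψ.tendsto_atTop
  simp only [Function.comp_def] at hx hg
  simp only [← hσdef] at ha hd hx hg
  clear hmem hC hφg hφx
  have hmt := hg.inner hd (𝕜 := ℝ)
  -- monotone decrease
  have hstep : ∀ k, f (x (k+1)) ≤ f (x k) + β * θ ^ j k * ⟪gradient f (x k), h k - x k⟫ := by
    intro k; rw [hupd k]; exact harmijo k
  have hanti : Antitone (fun k => f (x k)) := by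
    refine antitone_nat_of_succ_le fun k => ?_
    have h1 := hstep k
    have h2 := mul_nonneg (mul_nonneg hβ.1.le (pow_nonneg hθ.1.le (j k))) (neg_nonneg.2 (hm0 k))
    linarith
  have hft : Tendsto (fun k => f (x k)) atTop (nhds (f xs)) :=
    (tendsto_iff_tendsto_subseq_of_antitone hanti hσ).2 ((hf.continuous.tendsto xs).comp hx)
  have hgap : Tendsto (fun n => f (x (σ n)) - f (x (σ n + 1))) atTop (nhds 0) := by
    have := (hft.sub (hft.comp (tendsto_add_atTop_nat 1))).comp hσ
    simpa [Function.comp_def] using this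
  have hms : ⟪gradient f xs, d⟫ = 0 := by
    have hle : ⟪gradient f xs, d⟫ ≤ 0 := le_of_tendsto hmt (Eventually.of_forall fun n => hm0 _)
    by_contra hne
    have hlt : ⟪gradient f xs, d⟫ < 0 := lt_of_le_of_ne hle hne
    have hq : Tendsto (fun n => (f (x (σ n)) - f (x (σ n + 1))) /
        (β * -⟪gradient f (x (σ n)), h (σ n) - x (σ n)⟫)) atTop (nhds 0) := by
      have := hgap.div (hmt.neg.const_mul β) (mul_pos hβ.1 (neg_pos.2 hlt)).ne'
      rw [zero_div] at this
      exact this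
    have hev : ∀ᶠ n in atTop, ⟪gradient f (x (σ n)), h (σ n) - x (σ n)⟫ < 0 :=
      hmt.eventually_lt_const hlt
    have hpow : Tendsto (fun n => θ ^ j (σ n)) atTop (nhds 0) := by
      refine squeeze_zero' (Eventually.of_forall fun n => pow_nonneg hθ.1.le _) ?_ hq
      filter_upwards [hev] with n hn
      rw [le_div_iff₀ (mul_pos hβ.1 (neg_pos.2 hn))]
      linarith [hstep (σ n)]
    have ht : Tendsto (fun n => θ ^ j (σ n) / θ) atTop (nhds 0) := by
      simpa using hpow.div_const θ
    have hy : Tendsto (fun n => x (σ n) + (θ ^ j (σ n) / θ) • (h (σ n) - x (σ n))) atTop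
        (nhds xs) := by
      simpa using hx.add (ht.smul hd)
    have hstrict : HasStrictFDerivAt f (fderiv ℝ f xs) xs :=
      hf.contDiffAt.hasStrictFDerivAt one_ne_zero
    have hgr : ∀ v, fderiv ℝ f xs v = ⟪gradient f xs, v⟫ := by
      intro v
      simp [gradient]
    have hkey : ∀ c > 0, β * ⟪gradient f xs, d⟫ ≤ ⟪gradient f xs, d⟫ + c * ‖d‖ := by
      intro c hc
      refine le_of_tendsto_of_tendsto (hmt.const_mul β)
        ((tendsto_const_nhds.inner hd (𝕜 := ℝ)).add (hd.norm.const_mul c)) ?_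
      have hpr : Tendsto (fun n => (x (σ n) + (θ ^ j (σ n) / θ) • (h (σ n) - x (σ n)), x (σ n)))
          atTop (nhds (xs, xs)) := hy.prodMk_nhds hx
      have hb := hpr.eventually (hstrict.isLittleO.def hc)
      filter_upwards [hb, hpow.eventually_lt_const one_pos] with n hn hn1
      have hj : j (σ n) ≠ 0 := by
        intro h0; rw [h0] at hn1; simp at hn1
      obtain ⟨i, hi⟩ := Nat.exists_eq_succ_of_ne_zero hj
      have hti : θ ^ j (σ n) / θ = θ ^ i := by
        rw [hi, pow_succ, mul_div_cancel_right₀ _ hθ.1.ne']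
      have hno := hjmin (σ n) i (by omega)
      simp only [hti] at hn
      push Not at hno
      have htp : 0 < θ ^ i := pow_pos hθ.1 i
      rw [add_sub_cancel_left, hgr, real_inner_smul_right, norm_smul, Real.norm_eq_abs,
        Real.norm_eq_abs, abs_of_pos htp] at hn
      have hn' := (le_abs_self _).trans hn
      refine le_of_mul_le_mul_left ?_ htp
      linarith
    have hk : β * ⟪gradient f xs, d⟫ ≤ ⟪gradient f xs, d⟫ := by
      refine ge_of_tendsto (x := nhdsWithin (0:ℝ) (Set.Ioi 0))
        (f := fun c : ℝ => ⟪gradient f xs, d⟫ + c * ‖d‖) ?_ ?_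
      · have : Continuous (fun c : ℝ => ⟪gradient f xs, d⟫ + c * ‖d‖) := by fun_prop
        have := this.tendsto 0
        simp only [zero_mul, add_zero] at this
        exact this.mono_left nhdsWithin_le_nhds
      · filter_upwards [self_mem_nhdsWithin] with c hc using hkey c hc
    nlinarith [hβ.2]
  have hd0 : d = 0 := by
    have := le_of_tendsto ((hd.norm.pow 2).add (ha.mul hmt)) (Eventually.of_forall fun n => hm _)
    rw [hms, mul_zero, add_zero] at this
    exact norm_eq_zero.1 (pow_eq_zero_iff two_ne_zero |>.1 (le_antisymm this (sq_nonneg _)))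
  intro z hz
  have hlim := le_of_tendsto (((hd.neg.sub (ha.smul hg)).inner
    ((tendsto_const_nhds (x := z)).sub hx |>.sub hd) (𝕜 := ℝ)))
    (Eventually.of_forall fun n => hVI _ z hz)
  rw [hd0, neg_zero, zero_sub, sub_zero, inner_neg_left, real_inner_smul_left] at hlim
  exact nonneg_of_mul_nonneg_right (by linarith) ha0
end
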